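/- For any permutation w with no descents at or after position n, there exist nonnegative integers c_{w,b} such that 𝔖_w = 𝔉_{L(w)} + Σ_{b > L(w)} c_{w,b} 𝔉_b, where L(w) is the Lehmer code of w and the sum is over weak compositions b of length n strictly dominating L(w). -/

import Mathlib

open scoped Classical

namespace SlidePaper

/-- Sum of the first `i` entries of a weak composition of length `n`. -/
def psum {n : ℕ} (a : Fin n → ℕ) (i : ℕ) : ℕ :=
  ∑ j ∈ Finset.univ.filter (fun j : Fin n => (j : ℕ) < i), a j

/-- `b` dominates `a`: all partial sums of `b` are at least those of `a`. -/
def Dominates {n : ℕ} (b a : Fin n → ℕ) : Prop :=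
  ∀ i : Fin (n + 1), psum a i ≤ psum b i

/-- The flattening of a weak composition: the list of its nonzero entries in order. -/
def flat {n : ℕ} (a : Fin n → ℕ) : List ℕ :=
  (List.ofFn a).filter (fun x => x ≠ 0)

/-- `β` refines `α`: `β` splits into consecutive blocks with sums `α₁, α₂, …`. -/
def Refines (β α : List ℕ) : Prop :=
  ∃ L : List (List ℕ), L.flatten = β ∧ L.map List.sum = α

/-- All weak compositions of length `n` with entries at most `k`. -/
def wcFinset (n k : ℕ) : Finset (Fin n → ℕ) :=
  Fintype.piFinset fun _ => Finset.range (k + 1)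

/-- The monomial slide polynomial `𝔐_a`. -/
noncomputable def slideM {n : ℕ} (a : Fin n → ℕ) : MvPolynomial (Fin n) ℤ :=
  ∑ b ∈ (wcFinset n (∑ i, a i)).filter (fun b => Dominates b a ∧ flat b = flat a),
    MvPolynomial.monomial (Finsupp.equivFunOnFinite.symm b) 1

/-- The fundamental slide polynomial `𝔉_a`. -/
noncomputable def slideF {n : ℕ} (a : Fin n → ℕ) : MvPolynomial (Fin n) ℤ :=
  ∑ b ∈ (wcFinset n (∑ i, a i)).filter (fun b => Dominates b a ∧ Refines (flat b) (flat a)),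
    MvPolynomial.monomial (Finsupp.equivFunOnFinite.symm b) 1

/-- A weak composition is quasi-flat if its nonzero entries occupy consecutive positions. -/
def QuasiFlat {n : ℕ} (a : Fin n → ℕ) : Prop :=
  ∀ i j l : Fin n, i ≤ j → j ≤ l → a i ≠ 0 → a l ≠ 0 → a j ≠ 0

/-- `b` strongly dominates `a`. -/
def StronglyDominates {n : ℕ} (b a : Fin n → ℕ) : Prop :=
  Dominates b a ∧ ∀ c : Fin n → ℕ, Dominates c a → flat c = flat b → Dominates c b

/-- The exponent vector placing the parts of `α` at the positions `i`. -/
noncomputable def placeExp {n : ℕ} (α : List ℕ) (i : Fin α.length → Fin n) : Fin n →₀ ℕ :=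
  ∑ t : Fin α.length, Finsupp.single (i t) (α.get t)

/-- `f` is quasisymmetric in the variables `x_1, …, x_k` (0-indexed: `x_0, …, x_{k-1}`). -/
def IsQuasisymmetricIn {n : ℕ} (k : ℕ) (f : MvPolynomial (Fin n) ℤ) : Prop :=
  ∀ α : List ℕ, (∀ x ∈ α, 0 < x) →
    ∀ i j : Fin α.length → Fin n, StrictMono i → StrictMono j →
      (∀ t, (i t : ℕ) < k) → (∀ t, (j t : ℕ) < k) →
      MvPolynomial.coeff (placeExp α i) f = MvPolynomial.coeff (placeExp α j) f

/-- The monomial quasisymmetric polynomial `M_α(x_1, …, x_k)` inside `ℤ[x_1, …, x_n]`. -/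
noncomputable def Mqs (n k : ℕ) (α : List ℕ) : MvPolynomial (Fin n) ℤ :=
  ∑ i ∈ (Finset.univ : Finset (Fin α.length → Fin n)).filter
      (fun i : Fin α.length → Fin n => StrictMono i ∧ ∀ t, (i t : ℕ) < k),
    ∏ t : Fin α.length, (MvPolynomial.X (i t) : MvPolynomial (Fin n) ℤ) ^ α.get t

/-- The fundamental quasisymmetric polynomial `F_α(x_1, …, x_k)` inside `ℤ[x_1, …, x_n]`. -/
noncomputable def Fqs (n k : ℕ) (α : List ℕ) : MvPolynomial (Fin n) ℤ :=
  ∑ c ∈ (Finset.univ : Finset (Composition α.sum)).filter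
      (fun c => Refines c.blocks α ∧ c.blocks.length ≤ k),
    Mqs n k c.blocks

/-- Place the weak composition `a` (of length `N`) at offset `k` inside length `M`. -/
def shiftComp {N : ℕ} (k M : ℕ) (a : Fin N → ℕ) : Fin M → ℕ :=
  fun i => if h : k ≤ (i : ℕ) ∧ (i : ℕ) - k < N then a ⟨(i : ℕ) - k, h.2⟩ else 0

/-- Spread the values `g` to positions `ι` inside a weak composition of length `n`. -/
def spread {l n : ℕ} (ι : Fin l → Fin n) (g : Fin l → ℕ) : Fin n → ℕ :=
  fun i => ∑ k, if ι k = i then g k else 0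

/-- The monomial quasisymmetric function `M_α` in infinitely many variables. -/
noncomputable def MqsFun (α : List ℕ) : MvPowerSeries ℕ ℤ :=
  fun d => if ∃ i : Fin α.length → ℕ, StrictMono i ∧
      d = ∑ t : Fin α.length, Finsupp.single (i t) (α.get t) then 1 else 0

/-- The fundamental quasisymmetric function `F_α` in infinitely many variables. -/
noncomputable def FqsFun (α : List ℕ) : MvPowerSeries ℕ ℤ :=
  ∑ c ∈ (Finset.univ : Finset (Composition α.sum)).filter (fun c => Refines c.blocks α),
    MqsFun c.blocks

/-- The cells of the Young diagram of `lam` (French notation): row `r` (from the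
bottom, 0-indexed) has `lam.get r` cells. -/
abbrev Cells (lam : List ℕ) := Σ r : Fin lam.length, Fin (lam.get r)

/-- A filling of `lam` with entries in `{1, …, n}` (encoded as `Fin n`) is a semistandard
Young tableau: rows weakly increase left to right, columns strictly increase bottom to top. -/
def IsSSYT {n : ℕ} {lam : List ℕ} (T : Cells lam → Fin n) : Prop :=
  (∀ (r : Fin lam.length) (c c' : Fin (lam.get r)), c ≤ c' → T ⟨r, c⟩ ≤ T ⟨r, c'⟩) ∧
  (∀ (r r' : Fin lam.length) (c' : Fin (lam.get r')) (h : (c' : ℕ) < lam.get r),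
      (r : ℕ) < (r' : ℕ) → T ⟨r, ⟨c', h⟩⟩ < T ⟨r', c'⟩)

/-- The weight of a filling: the `v`-th entry counts the occurrences of the value `v`. -/
def wtT {n : ℕ} {lam : List ℕ} (T : Cells lam → Fin n) : Fin n → ℕ :=
  fun v => (Finset.univ.filter (fun x : Cells lam => T x = v)).card

/-- A filling is quasi-Yamanouchi if for every value `v > 1`, the leftmost occurrence of `v`
lies weakly left of some occurrence of `v - 1`. -/
def IsQY {n : ℕ} {lam : List ℕ} (T : Cells lam → Fin n) : Prop :=
  ∀ (v : Fin n) (x : Cells lam), T x = v → 0 < (v : ℕ) →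
    (∀ y : Cells lam, T y = v → (x.2 : ℕ) ≤ (y.2 : ℕ)) →
    ∃ z : Cells lam, (T z : ℕ) + 1 = (v : ℕ) ∧ (x.2 : ℕ) ≤ (z.2 : ℕ)

/-- The Schur polynomial `s_lam(x_1, …, x_n)` as the generating function of
semistandard Young tableaux. -/
noncomputable def schurPoly (n : ℕ) (lam : List ℕ) : MvPolynomial (Fin n) ℤ :=
  ∑ T ∈ (Finset.univ : Finset (Cells lam → Fin n)).filter (fun T => IsSSYT T),
    MvPolynomial.monomial (Finsupp.equivFunOnFinite.symm (wtT T)) 1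

/-- One destandardization step on fillings: for some value `v` occurring in `T` whose
leftmost occurrence is strictly right of every occurrence of `v - 1`, every `v` is
decremented to `v - 1`. -/
def TabStep {n : ℕ} {lam : List ℕ} (T T' : Cells lam → Fin n) : Prop :=
  ∃ v : Fin n, 0 < (v : ℕ) ∧ (∃ x, T x = v) ∧
    (∀ x y : Cells lam, T x = v → (T y : ℕ) + 1 = (v : ℕ) → (y.2 : ℕ) < (x.2 : ℕ)) ∧
    ∀ x : Cells lam, (T' x : ℕ) = if T x = v then (v : ℕ) - 1 else (T x : ℕ)

/-- The reading word of a set of crosses: rows are read from top to bottom, each row from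
left to right, the cross in (0-indexed) row `i` and column `j` recording the letter `i + j`
(representing the simple transposition swapping `i + j` and `i + j + 1` of `{0, 1, 2, …}`). -/
def readWord (P : Finset (ℕ × ℕ)) : List ℕ :=
  ((List.range (P.sup Prod.fst + 1)).reverse).flatMap
    (fun i => ((List.range (P.sup Prod.snd + 1)).filter (fun j => decide ((i, j) ∈ P))).map
      (fun j => i + j))

/-- The permutation `s_{i_ℓ} ⋯ s_{i_1}` associated to the word `(i_1, …, i_ℓ)`,
where `s_k` swaps `k` and `k + 1`. -/
def wordPerm (l : List ℕ) : Equiv.Perm ℕ :=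
  ((l.map (fun k => Equiv.swap k (k + 1))).reverse).prod

/-- A word is reduced if no shorter word has the same product. -/
def IsReducedWord (l : List ℕ) : Prop :=
  ∀ l' : List ℕ, wordPerm l' = wordPerm l → l.length ≤ l'.length

/-- `P` is a reduced pipe dream of shape `w`: the pipes trace out `w` and no two pipes
cross more than once, equivalently the reading word of `P` is a reduced word for `w`. -/
def IsPD (w : Equiv.Perm ℕ) (P : Finset (ℕ × ℕ)) : Prop :=
  wordPerm (readWord P) = w ∧ IsReducedWord (readWord P)

/-- `P` is a quasi-Yamanouchi pipe dream of shape `w`: for every row, the westernmost cross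
is in the first column or lies weakly west of some cross in the row above. -/
def IsQPD (w : Equiv.Perm ℕ) (P : Finset (ℕ × ℕ)) : Prop :=
  IsPD w P ∧ ∀ i j : ℕ, (i, j) ∈ P → (∀ j', (i, j') ∈ P → j ≤ j') →
    (j = 0 ∨ ∃ j', (i + 1, j') ∈ P ∧ j ≤ j')

/-- One destandardization step on pipe dreams: a row with no cross in the first column,
all of whose crosses lie strictly east of every cross in the row above, has all its
crosses moved one step northwest. -/
def PDStep (P P' : Finset (ℕ × ℕ)) : Prop :=
  ∃ r : ℕ, (∃ j, (r, j) ∈ P) ∧ (r, 0) ∉ P ∧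
    (∀ j j', (r, j) ∈ P → (r + 1, j') ∈ P → j' < j) ∧
    P' = P.filter (fun p => p.1 ≠ r) ∪
      (P.filter (fun p => p.1 = r)).image (fun p => (r + 1, p.2 - 1))

/-- The number of crosses of `P` in (0-indexed) row `i`. -/
def rowWt (P : Finset (ℕ × ℕ)) (i : ℕ) : ℕ := (P.filter (fun p => p.1 = i)).card

/-- The weight of a pipe dream, as a weak composition of length `n`. -/
def wtFin (n : ℕ) (P : Finset (ℕ × ℕ)) : Fin n → ℕ := fun i => rowWt P (i : ℕ)

/-- The flattened weight of a pipe dream: the list of nonzero row counts, bottom row first. -/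
def flatWt (P : Finset (ℕ × ℕ)) : List ℕ :=
  ((List.range (P.sup Prod.fst + 1)).map (rowWt P)).filter (fun x => x ≠ 0)

/-- The Schubert polynomial of `w` in the variables `x_1, …, x_n`, as the generating
function of reduced pipe dreams of shape `w`. -/
noncomputable def SchubertPoly (n : ℕ) (w : Equiv.Perm ℕ) : MvPolynomial (Fin n) ℤ :=
  ∑ᶠ P ∈ {P : Finset (ℕ × ℕ) | IsPD w P},
    MvPolynomial.monomial (Finsupp.equivFunOnFinite.symm (wtFin n P)) 1

/-- The Lehmer code of `w` (0-indexed): `lehmer w i` counts `j > i` with `w j < w i`. -/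
noncomputable def lehmer (w : Equiv.Perm ℕ) (i : ℕ) : ℕ :=
  Set.ncard {j : ℕ | i < j ∧ w j < w i}

/-- The Lehmer code of `w` as a weak composition of length `n`. -/
noncomputable def lehmerFin (n : ℕ) (w : Equiv.Perm ℕ) : Fin n → ℕ :=
  fun i => lehmer w (i : ℕ)

/-- The number of inversions of `w`. -/
noncomputable def invCount (w : Equiv.Perm ℕ) : ℕ :=
  Set.ncard {p : ℕ × ℕ | p.1 < p.2 ∧ w p.2 < w p.1}

/-- The largest entry of the Lehmer code of `w`. -/
noncomputable def maxLehmer (w : Equiv.Perm ℕ) : ℕ :=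
  sSup (Set.range (lehmer w))

/-- The (0-indexed) position of the first descent of `w`. -/
noncomputable def firstDescent (w : Equiv.Perm ℕ) : ℕ :=
  sInf {i : ℕ | w (i + 1) < w i}

/-- `δ(w) = 1` if every position attaining `max(L(w))` is at or before the first descent,
and `δ(w) = 0` otherwise. -/
noncomputable def delta (w : Equiv.Perm ℕ) : ℤ :=
  if ∀ i : ℕ, lehmer w i = maxLehmer w → i ≤ firstDescent w then 1 else 0

/-- `η(w) = inv(w) − max(L(w)) + δ(w) − min{i : w_i > w_{i+1}}`. -/
noncomputable def eta (w : Equiv.Perm ℕ) : ℤ :=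
  (invCount w : ℤ) - (maxLehmer w : ℤ) + delta w - ((firstDescent w : ℤ) + 1)

/-- The decomposition of a list into maximal strictly increasing runs. -/
def runsStrict : List ℕ → List (List ℕ)
  | [] => []
  | x :: rest =>
    match runsStrict rest, rest with
    | r :: rs, y :: _ => if x < y then (x :: r) :: rs else [x] :: r :: rs
    | _, _ => [[x]]

/-- The descent composition of a word: lengths of its maximal increasing runs, a new run
beginning whenever a letter is followed by a weakly smaller letter. -/
def desStrict (l : List ℕ) : List ℕ := (runsStrict l).map List.length

/-- The decomposition of a list into maximal weakly increasing runs. -/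
def runsWeak : List ℕ → List (List ℕ)
  | [] => []
  | x :: rest =>
    match runsWeak rest, rest with
    | r :: rs, y :: _ => if x ≤ y then (x :: r) :: rs else [x] :: r :: rs
    | _, _ => [[x]]

/-- The descent composition of a word: the lengths of its maximal weakly increasing runs. -/
def desComp (l : List ℕ) : List ℕ := (runsWeak l).map List.length

/-- The permutation `1^m × w`, fixing `0, …, m-1` and acting by `w` shifted by `m` above. -/
def shiftPerm (m : ℕ) (w : Equiv.Perm ℕ) : Equiv.Perm ℕ where
  toFun i := if i < m then i else w (i - m) + m
  invFun i := if i < m then i else w.symm (i - m) + m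
  left_inv i := by
    dsimp only
    by_cases h : i < m
    · simp [h]
    · have h2 : ¬ (w (i - m) + m < m) := by omega
      rw [if_neg h, if_neg h2, Nat.add_sub_cancel, Equiv.symm_apply_apply]
      omega
  right_inv i := by
    dsimp only
    by_cases h : i < m
    · simp [h]
    · have h2 : ¬ (w.symm (i - m) + m < m) := by omega
      rw [if_neg h, if_neg h2, Nat.add_sub_cancel, Equiv.apply_symm_apply]
      omega

/-- The quasi-shuffle product of two (strong) compositions, as a multiset of compositions. -/
def qShuffle : List ℕ → List ℕ → Multiset (List ℕ)
  | [], β => {β}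
  | α, [] => {α}
  | a :: α, b :: β =>
      ((qShuffle α (b :: β)).map (a :: ·)) + ((qShuffle (a :: α) β).map (b :: ·)) +
        ((qShuffle α β).map ((a + b) :: ·))
termination_by α β => α.length + β.length
decreasing_by all_goals (simp only [List.length_cons]; omega)

def shuffles : List ℕ → List ℕ → Multiset (List ℕ)
  | [], B => {B}
  | A, [] => {A}
  | x :: A, y :: B =>
      ((shuffles A (y :: B)).map (x :: ·)) + ((shuffles (x :: A) B).map (y :: ·))
termination_by A B => A.length + B.length
decreasing_by all_goals (simp only [List.length_cons]; omega)

/-- The word `(2n-1)^{a_1} (2n-3)^{a_2} ⋯ 1^{a_n}` associated to a weak composition `a`. -/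
def wordA {n : ℕ} (a : Fin n → ℕ) : List ℕ :=
  (List.ofFn (fun i : Fin n => List.replicate (a i) (2 * n - 2 * (i : ℕ) - 1))).flatten

/-- The word `(2n)^{b_1} (2n-2)^{b_2} ⋯ 2^{b_n}` associated to a weak composition `b`. -/
def wordB {n : ℕ} (b : Fin n → ℕ) : List ℕ :=
  (List.ofFn (fun i : Fin n => List.replicate (b i) (2 * n - 2 * (i : ℕ)))).flatten

/-- A list (padded with trailing zeros) dominates a weak composition of length `n`. -/
def DominatesList {n : ℕ} (l : List ℕ) (a : Fin n → ℕ) : Prop :=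
  ∀ i : Fin (n + 1), psum a (i : ℕ) ≤ ((l.take (i : ℕ)).sum)

/-- The number of letters of the `A`-word (the odd letters) in the `k`-th weakly
increasing run of `C`. -/
def runCountA (C : List ℕ) (k : Fin (runsWeak C).length) : ℕ :=
  (((runsWeak C).get k).filter (fun z => z % 2 = 1)).length

/-- The number of letters of the `B`-word (the even letters) in the `k`-th weakly
increasing run of `C`. -/
def runCountB (C : List ℕ) (k : Fin (runsWeak C).length) : ℕ :=
  (((runsWeak C).get k).filter (fun z => z % 2 = 0)).length

/-- The length of the `k`-th weakly increasing run of `C`. -/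
def runLen (C : List ℕ) (k : Fin (runsWeak C).length) : ℕ :=
  ((runsWeak C).get k).length

/-- `c = bump_{(a,b)}(C)`: the unique weak composition of length `n` obtained by inserting
zero parts into `Des(C)` so that the correspondingly placed `Des_A` and `Des_B` dominate
`a` and `b`, minimal in dominance order among all such insertions. -/
def IsBumpS {n : ℕ} (a b : Fin n → ℕ) (C : List ℕ) (c : Fin n → ℕ) : Prop :=
  ∃ ι : Fin (runsWeak C).length → Fin n, StrictMono ι ∧
    c = spread ι (runLen C) ∧
    Dominates (spread ι (runCountA C)) a ∧ Dominates (spread ι (runCountB C)) b ∧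
    ∀ ι' : Fin (runsWeak C).length → Fin n, StrictMono ι' →
      Dominates (spread ι' (runCountA C)) a → Dominates (spread ι' (runCountB C)) b →
      Dominates (spread ι' (runLen C)) c

/-- The multiplicity `[c ∣ a ⧢ b]` of `c` in the slide product of `a` and `b`: the number of
shuffles `C` of the words of `a` and `b` lying in the shuffle set `SS(a,b)` with
`bump_{(a,b)}(C) = c`. -/
noncomputable def slideMult {n : ℕ} (a b c : Fin n → ℕ) : ℕ :=
  Multiset.card ((shuffles (wordA a) (wordB b)).filter
    (fun C => DominatesList ((runsWeak C).map
        (fun r => (r.filter (fun z => z % 2 = 1)).length)) a ∧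
      DominatesList ((runsWeak C).map (fun r => (r.filter (fun z => z % 2 = 0)).length)) b ∧
      IsBumpS a b C c))

/-- Membership in the quasi-shuffle set `QSS(a,b)`: a pair `(γ_a, γ_b)` of weak compositions
of a common length at most `n` with `γ_a ≥ a`, `flat(γ_a) = flat(a)`, `γ_b ≥ b`,
`flat(γ_b) = flat(b)` (after padding with trailing zeros), and all entries of
`γ_a + γ_b` positive. -/
def InQSS {n : ℕ} (a b : Fin n → ℕ) (x : (l : ℕ) × (Fin l → ℕ) × (Fin l → ℕ)) : Prop :=
  x.1 ≤ n ∧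
  Dominates (shiftComp 0 n x.2.1) a ∧ flat x.2.1 = flat a ∧
  Dominates (shiftComp 0 n x.2.2) b ∧ flat x.2.2 = flat b ∧
  ∀ k : Fin x.1, 0 < x.2.1 k + x.2.2 k

/-- `c = bump_{(a,b)}(γ_a, γ_b)`: the unique weak composition `c` of length `n` with
`flat(c) = γ_a + γ_b` whose decomposition `c = c_a + c_b` satisfies `c_a ≥ a` and
`c_b ≥ b`, minimal in dominance order among all such compositions. -/
def IsBumpQ {n : ℕ} (a b : Fin n → ℕ) (x : (l : ℕ) × (Fin l → ℕ) × (Fin l → ℕ))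
    (c : Fin n → ℕ) : Prop :=
  ∃ ι : Fin x.1 → Fin n, StrictMono ι ∧
    c = spread ι (fun k => x.2.1 k + x.2.2 k) ∧
    Dominates (spread ι x.2.1) a ∧ Dominates (spread ι x.2.2) b ∧
    ∀ ι' : Fin x.1 → Fin n, StrictMono ι' →
      Dominates (spread ι' x.2.1) a → Dominates (spread ι' x.2.2) b →
      Dominates (spread ι' (fun k => x.2.1 k + x.2.2 k)) c

/-- The multiplicity `[c ∣ a ⧻ b]` of `c` in the quasi-slide product of `a` and `b`: the
number of pairs in the quasi-shuffle set `QSS(a,b)` whose bump is `c`. -/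
noncomputable def qsMult {n : ℕ} (a b c : Fin n → ℕ) : ℕ :=
  Nat.card {x : (l : ℕ) × (Fin l → ℕ) × (Fin l → ℕ) // InQSS a b x ∧ IsBumpQ a b x c}

/-- The Stanley symmetric function `S_w`. -/
noncomputable def StanleySym (w : Equiv.Perm ℕ) : MvPowerSeries ℕ ℤ :=
  ∑ᶠ l ∈ {l : List ℕ | wordPerm l = w ∧ IsReducedWord l}, FqsFun (desStrict l)

/-!
Group the reduced pipe dreams of `w` by reading word. A pipe dream with a given word amounts to
a sequence of rows for its crosses, read in order, subject to local upper bounds. There is a largest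
such sequence, and comparing row sequences with partial sums of weights shows that the other ones
index exactly the monomials of the slide polynomial of the largest one's weight. Hence `𝔖_w` is a
sum of slide polynomials, one for each reading word.

The crosses weakly above row `k` spell a prefix of a reduced word in the letters `≥ k`, and the
inversions `(i, j)` of that prefix are inversions of `w` with `i ≥ k`. Counting them shows that
every weight dominates `L(w)`. In case of equality all these inversions occur, which forces each
row of the pipe dream to be left-justified, so that `L(w)` comes from a single reading word.
-/
/-! ### Pipe dreams in reading order -/

/-- The reading order on crosses: rows from top to bottom, each row from left to right. -/
abbrev ReadsBefore : ℕ × ℕ → ℕ × ℕ → Prop := Prod.Lex (· > ·) (· < ·)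

/-- The crosses of `P` in reading order, so that `readWord P` lists their letters. -/
def crossList (P : Finset (ℕ × ℕ)) : List (ℕ × ℕ) :=
  (List.range (P.sup Prod.fst + 1)).reverse.flatMap fun i =>
    ((List.range (P.sup Prod.snd + 1)).filter fun j => decide ((i, j) ∈ P)).map (Prod.mk i)

/-- The crosses of `P` weakly above row `k`. -/
def rowsFrom (P : Finset (ℕ × ℕ)) (k : ℕ) : Finset (ℕ × ℕ) := P.filter (k ≤ ·.1)

section Reading

variable {P Q : Finset (ℕ × ℕ)} {l : List (ℕ × ℕ)} {p : ℕ × ℕ} {a k t : ℕ}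

theorem readWord_eq_map_crossList (P : Finset (ℕ × ℕ)) :
    readWord P = (crossList P).map fun p => p.1 + p.2 := by
  simp [readWord, crossList, List.map_flatMap, Function.comp_def]

@[simp]
theorem mem_crossList : p ∈ crossList P ↔ p ∈ P := by
  obtain ⟨i, j⟩ := p
  simp only [crossList, List.mem_flatMap, List.mem_reverse, List.mem_range, List.mem_map,
    List.mem_filter, decide_eq_true_eq, Prod.mk.injEq]
  refine ⟨?_, fun h => ?_⟩
  · rintro ⟨_, -, _, ⟨-, h⟩, rfl, rfl⟩
    exact h
  · exact ⟨i, Nat.lt_succ_of_le (Finset.le_sup (f := Prod.fst) h), j,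
      ⟨Nat.lt_succ_of_le (Finset.le_sup (f := Prod.snd) h), h⟩, rfl, rfl⟩

theorem pairwise_crossList (P : Finset (ℕ × ℕ)) : (crossList P).Pairwise ReadsBefore := by
  rw [crossList, List.pairwise_flatMap, List.pairwise_reverse]
  refine ⟨fun i _ => ?_, List.pairwise_lt_range.imp fun hab p hp q hq => ?_⟩
  · exact List.pairwise_map.2 ((List.pairwise_lt_range.filter _).imp (Prod.Lex.right i))
  · obtain ⟨_, -, rfl⟩ := List.mem_map.1 hp
    obtain ⟨_, -, rfl⟩ := List.mem_map.1 hq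
    exact Prod.Lex.left _ _ hab

theorem crossList_eq (hl : l.Pairwise ReadsBefore) (h : ∀ p, p ∈ l ↔ p ∈ P) :
    crossList P = l :=
  (pairwise_crossList P).eq_of_mem_iff hl fun p => by rw [mem_crossList, h]

theorem length_crossList (P : Finset (ℕ × ℕ)) : (crossList P).length = P.card := by
  rw [← List.toFinset_card_of_nodup (pairwise_crossList P).nodup]
  congr 1
  ext p
  simp

theorem length_readWord (P : Finset (ℕ × ℕ)) : (readWord P).length = P.card := by
  rw [readWord_eq_map_crossList, List.length_map, length_crossList]

theorem mem_readWord : a ∈ readWord P ↔ ∃ p ∈ P, p.1 + p.2 = a := by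
  simp [readWord_eq_map_crossList]

theorem crossList_union (h : ∀ p ∈ P, ∀ q ∈ Q, q.1 < p.1) :
    crossList (P ∪ Q) = crossList P ++ crossList Q := by
  refine crossList_eq (List.pairwise_append.2 ⟨pairwise_crossList P, pairwise_crossList Q, ?_⟩)
    (by simp)
  intro p hp q hq
  exact Prod.Lex.left _ _ (h p (mem_crossList.1 hp) q (mem_crossList.1 hq))

theorem readWord_union (h : ∀ p ∈ P, ∀ q ∈ Q, q.1 < p.1) :
    readWord (P ∪ Q) = readWord P ++ readWord Q := by
  simp only [readWord_eq_map_crossList, crossList_union h, List.map_append]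

@[simp]
theorem mem_rowsFrom : p ∈ rowsFrom P k ↔ p ∈ P ∧ k ≤ p.1 := Finset.mem_filter

theorem crossList_eq_append (P : Finset (ℕ × ℕ)) (k : ℕ) :
    crossList P = crossList (rowsFrom P k) ++ crossList (P.filter (¬ k ≤ ·.1)) := by
  rw [← crossList_union, rowsFrom, Finset.filter_union_filter_not_eq]
  intro p hp q hq
  exact (not_le.1 (Finset.mem_filter.1 hq).2).trans_le (mem_rowsFrom.1 hp).2

theorem readWord_rowsFrom_prefix (P : Finset (ℕ × ℕ)) (k : ℕ) :
    readWord (rowsFrom P k) <+: readWord P := by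
  simp only [readWord_eq_map_crossList, crossList_eq_append P k, List.map_append,
    List.prefix_append]

theorem readWord_rowsFrom (P : Finset (ℕ × ℕ)) (k : ℕ) :
    readWord (rowsFrom P k) =
      readWord (rowsFrom P (k + 1)) ++ readWord (P.filter (·.1 = k)) := by
  rw [← readWord_union]
  · congr 1
    ext p
    simp only [Finset.mem_union, mem_rowsFrom, Finset.mem_filter]
    grind
  · intro p hp q hq
    exact (Finset.mem_filter.1 hq).2.trans_lt (mem_rowsFrom.1 hp).2

theorem le_of_mem_readWord_rowsFrom (ha : a ∈ readWord (rowsFrom P k)) : k ≤ a := by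
  obtain ⟨p, hp, rfl⟩ := mem_readWord.1 ha
  exact (mem_rowsFrom.1 hp).2.trans (Nat.le_add_right _ _)

theorem le_fst_getElem_crossList_iff (ht : t < (crossList P).length) :
    k ≤ (crossList P)[t].1 ↔ t < (rowsFrom P k).card := by
  simp only [crossList_eq_append P k, List.getElem_append, length_crossList]
  split_ifs with h
  · exact iff_of_true (mem_rowsFrom.1 (mem_crossList.1 (List.getElem_mem _))).2 h
  · exact iff_of_false
      (Finset.mem_filter (p := (¬ k ≤ ·.1)).1 (mem_crossList.1 (List.getElem_mem _))).2 h

theorem card_rowsFrom_add (P : Finset (ℕ × ℕ)) (k : ℕ) :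
    ∑ i ∈ Finset.range k, rowWt P i + (rowsFrom P k).card = P.card := by
  have h := Finset.card_eq_sum_card_fiberwise (s := P.filter (¬ k ≤ ·.1)) (f := Prod.fst)
    (t := Finset.range k) fun p hp => by simpa using (Finset.mem_filter.1 hp).2
  rw [add_comm, rowsFrom, ← Finset.card_filter_add_card_filter_not (s := P) (k ≤ ·.1), h]
  congr 1
  refine Finset.sum_congr rfl fun i hi => congrArg Finset.card ?_
  grind

end Reading
/-! ### Refinement and dominance through partial sums -/

section Refinement

variable {l l' α β : List ℕ} {x : ℕ}

theorem mem_partialSums_iff : x ∈ l.partialSums ↔ ∃ k, (l.take k).sum = x := by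
  simp only [List.mem_iff_getElem?, List.getElem?_partialSums, Option.ite_none_right_eq_some,
    Option.some.injEq]
  refine ⟨fun ⟨k, _, h⟩ => ⟨k, h⟩, fun ⟨k, h⟩ => ⟨min k l.length, min_le_right _ _, ?_⟩⟩
  rwa [← List.take_eq_take_min]

theorem zero_mem_partialSums (l : List ℕ) : 0 ∈ l.partialSums :=
  mem_partialSums_iff.2 ⟨0, rfl⟩

theorem sum_mem_partialSums (l : List ℕ) : l.sum ∈ l.partialSums :=
  mem_partialSums_iff.2 ⟨l.length, by rw [List.take_length]⟩

theorem le_sum_of_mem_partialSums (h : x ∈ l.partialSums) : x ≤ l.sum := by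
  obtain ⟨k, rfl⟩ := mem_partialSums_iff.1 h
  exact (List.take_sublist k l).sum_le_sum fun _ _ => Nat.zero_le _

theorem mem_partialSums_append :
    x ∈ (l ++ l').partialSums ↔ x ∈ l.partialSums ∨ ∃ y ∈ l'.partialSums, l.sum + y = x := by
  have hl := sum_mem_partialSums l
  cases l' with
  | nil =>
    simp only [List.append_nil, List.partialSums_nil, List.mem_singleton, exists_eq_left, add_zero]
    exact (or_iff_left_of_imp fun h => h ▸ hl).symm
  | cons a l' =>
    simp only [List.partialSums_append, List.partialSums_cons, List.tail_cons, List.mem_append,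
      List.mem_map, List.mem_cons]
    grind

theorem add_mem_partialSums_append_iff :
    l.sum + x ∈ (l ++ l').partialSums ↔ x ∈ l'.partialSums := by
  rw [mem_partialSums_append]
  refine ⟨?_, fun h => .inr ⟨x, h, rfl⟩⟩
  rintro (h | ⟨y, hy, h⟩)
  · obtain rfl : x = 0 := by simpa using le_sum_of_mem_partialSums h
    exact zero_mem_partialSums l'
  · rwa [← Nat.add_left_cancel h]

theorem mem_partialSums_filter_ne_zero :
    x ∈ (l.filter (· ≠ 0)).partialSums ↔ x ∈ l.partialSums := by
  induction l generalizing x with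
  | nil => rfl
  | cons a l ih =>
    by_cases ha : a = 0
    · have h0 := zero_mem_partialSums l
      simp only [ha, ne_eq, not_true_eq_false, decide_false, Bool.false_eq_true,
        not_false_eq_true, List.filter_cons_of_neg, ih, List.partialSums_cons, zero_add,
        List.map_id', List.mem_cons]
      grind
    · simp only [ne_eq, ha, not_false_eq_true, decide_true, List.filter_cons_of_pos,
        List.partialSums_cons, List.mem_cons, List.mem_map, ← ih]

theorem sum_filter_ne_zero (l : List ℕ) : (l.filter (· ≠ 0)).sum = l.sum :=
  le_antisymm (le_sum_of_mem_partialSums (mem_partialSums_filter_ne_zero.1 (sum_mem_partialSums _)))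
    (le_sum_of_mem_partialSums (mem_partialSums_filter_ne_zero.2 (sum_mem_partialSums _)))

theorem partialSums_map_sum_subset (L : List (List ℕ)) :
    (L.map List.sum).partialSums ⊆ L.flatten.partialSums := by
  induction L with
  | nil => exact fun _ h => h
  | cons l L ih =>
    rw [List.map_cons, List.partialSums_cons, List.flatten_cons, List.cons_subset]
    refine ⟨zero_mem_partialSums _, fun x hx => ?_⟩
    obtain ⟨y, hy, rfl⟩ := List.mem_map.1 hx
    exact add_mem_partialSums_append_iff.2 (ih hy)

theorem refines_of_partialSums_subset (hβ : 0 ∉ β) (hsum : β.sum = α.sum)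
    (h : α.partialSums ⊆ β.partialSums) : Refines β α := by
  induction α generalizing β with
  | nil =>
    rcases β with _ | ⟨b, β⟩
    · exact ⟨[], rfl, rfl⟩
    · rw [List.sum_cons, List.sum_nil] at hsum
      exact absurd (by simp; omega) hβ
  | cons a α ih =>
    rw [List.partialSums_cons, List.cons_subset] at h
    obtain ⟨k, hk⟩ := mem_partialSums_iff.1
      (h.2 (List.mem_map.2 ⟨0, zero_mem_partialSums α, add_zero a⟩))
    rw [← List.take_append_drop k β] at h
    obtain ⟨L, hL, rfl⟩ := ih (β := β.drop k) (fun h0 => hβ (List.mem_of_mem_drop h0))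
      (by have := β.sum_take_add_sum_drop k; rw [List.sum_cons] at hsum; omega)
      fun x hx => (add_mem_partialSums_append_iff (l := β.take k)).1
        (hk ▸ h.2 (List.mem_map_of_mem hx))
    exact ⟨β.take k :: L, by rw [List.flatten_cons, hL, List.take_append_drop],
      by rw [List.map_cons, hk]⟩

theorem refines_iff (hβ : 0 ∉ β) :
    Refines β α ↔ β.sum = α.sum ∧ α.partialSums ⊆ β.partialSums := by
  refine ⟨?_, fun h => refines_of_partialSums_subset hβ h.1 h.2⟩
  rintro ⟨L, rfl, rfl⟩
  exact ⟨List.sum_flatten, partialSums_map_sum_subset L⟩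

end Refinement

section PartialSums

variable {n : ℕ} {a b : Fin n → ℕ} {x k : ℕ}

theorem psum_mono (a : Fin n → ℕ) : Monotone (psum a) := fun i j h =>
  Finset.sum_le_sum_of_subset fun x hx => by
    simp only [Finset.mem_filter, Finset.mem_univ, true_and] at hx ⊢
    omega

@[simp]
theorem psum_zero (a : Fin n → ℕ) : psum a 0 = 0 := by simp [psum]

theorem psum_of_le (a : Fin n → ℕ) (h : n ≤ k) : psum a k = ∑ i, a i := by
  rw [psum, Finset.filter_true_of_mem fun x _ => x.2.trans_le h]

theorem psum_eq_sum_range (f : ℕ → ℕ) (h : k ≤ n) :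
    psum (fun i : Fin n => f i) k = ∑ i ∈ Finset.range k, f i := by
  refine Finset.sum_nbij (·.val) (by simp) Fin.val_injective.injOn (fun i hi => ?_)
    fun _ _ => rfl
  have hi : i < k := by simpa using hi
  exact ⟨⟨i, hi.trans_le h⟩, by simpa using hi, rfl⟩

theorem psum_succ (a : Fin n → ℕ) (i : Fin n) : psum a (i + 1) = psum a i + a i := by
  have : Finset.univ.filter (fun j : Fin n => (j : ℕ) < i + 1) =
      insert i (Finset.univ.filter fun j : Fin n => (j : ℕ) < i) := by
    grind
  rw [psum, this, Finset.sum_insert (by simp), add_comm, psum]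

theorem dominates_iff : Dominates b a ↔ ∀ k ≤ n, psum a k ≤ psum b k :=
  ⟨fun h k hk => h ⟨k, Nat.lt_succ_of_le hk⟩, fun h i => h i (Nat.le_of_lt_succ i.2)⟩

theorem Dominates.antisymm (h : Dominates b a) (h' : Dominates a b) : b = a := by
  have heq : ∀ k ≤ n, psum b k = psum a k := fun k hk =>
    le_antisymm (dominates_iff.1 h' k hk) (dominates_iff.1 h k hk)
  funext i
  have hsucc := heq (i + 1) i.2
  rw [psum_succ, psum_succ, heq i i.2.le] at hsucc
  exact Nat.add_left_cancel hsucc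

theorem sum_flat (a : Fin n → ℕ) : (flat a).sum = ∑ i, a i := by
  rw [flat, sum_filter_ne_zero, List.sum_ofFn]

theorem mem_partialSums_flat : x ∈ (flat a).partialSums ↔ ∃ k, psum a k = x := by
  rw [flat, mem_partialSums_filter_ne_zero, mem_partialSums_iff]
  simp only [List.sum_take_ofFn, psum]

theorem refines_flat_iff :
    Refines (flat b) (flat a) ↔ ∑ i, b i = ∑ i, a i ∧ Set.range (psum a) ⊆ Set.range (psum b) := by
  rw [refines_iff (by simp [flat]), sum_flat, sum_flat]
  refine and_congr_right fun _ => ?_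
  simp only [List.subset_def, mem_partialSums_flat]
  rfl

end PartialSums

/-! ### The row sequence of a weight -/

/-- The row of the `t`-th cross, in reading order, of a pipe dream of weight `b`: the crosses
strictly below row `k` are the last `psum b k` ones. -/
def rowSeq {n : ℕ} (b : Fin n → ℕ) (t : ℕ) : ℕ :=
  Nat.findGreatest (fun k => t + psum b k < ∑ i, b i) n

section RowSeq

variable {n : ℕ} {a b : Fin n → ℕ} {k t : ℕ}

theorem le_rowSeq_iff (ht : t < ∑ i, b i) : k ≤ rowSeq b t ↔ t + psum b k < ∑ i, b i := by
  refine ⟨fun h => ?_, fun h => Nat.le_findGreatest ?_ h⟩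
  · refine (Nat.add_le_add_left (psum_mono b h) t).trans_lt ?_
    exact Nat.findGreatest_spec (P := fun k => t + psum b k < ∑ i, b i) (Nat.zero_le n)
      (by simpa using ht)
  · by_contra! hk
    rw [psum_of_le b hk.le] at h
    exact h.not_ge (Nat.le_add_left _ _)

theorem rowSeq_lt (ht : t < ∑ i, b i) : rowSeq b t < n := by
  rw [← not_le, le_rowSeq_iff ht, psum_of_le b le_rfl]
  exact (Nat.le_add_left _ _).not_gt

theorem rowSeq_succ_le (ht : t + 1 < ∑ i, b i) : rowSeq b (t + 1) ≤ rowSeq b t := by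
  have h := (le_rowSeq_iff ht).1 le_rfl
  exact (le_rowSeq_iff (by omega)).2 (by omega)

theorem dominates_iff_rowSeq_le (hab : ∑ i, b i = ∑ i, a i) :
    Dominates b a ↔ ∀ t < ∑ i, a i, rowSeq b t ≤ rowSeq a t := by
  rw [dominates_iff]
  refine ⟨fun h t ht => ?_, fun h k hk => ?_⟩
  · have hle := (le_rowSeq_iff (hab ▸ ht)).1 (le_refl (rowSeq b t))
    have hdom := h _ (rowSeq_lt (hab ▸ ht)).le
    exact (le_rowSeq_iff ht).2 (by omega)
  · by_contra! hlt
    have hsum : psum a k ≤ ∑ i, a i := psum_of_le a le_rfl ▸ psum_mono a hk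
    have hb : k ≤ rowSeq b (∑ i, a i - psum a k) := (le_rowSeq_iff (by omega)).2 (by omega)
    have ha := (le_rowSeq_iff (by omega)).1 (hb.trans (h _ (by omega)))
    omega

theorem eq_of_rowSeq_eq (hab : ∑ i, b i = ∑ i, a i)
    (h : ∀ t < ∑ i, a i, rowSeq b t = rowSeq a t) : b = a :=
  Dominates.antisymm ((dominates_iff_rowSeq_le hab).2 fun t ht => (h t ht).le)
    ((dominates_iff_rowSeq_le hab.symm).2 fun t ht => (h t (hab ▸ ht)).ge)

theorem rowSeq_succ_lt_iff (ht : t + 1 < ∑ i, a i) :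
    rowSeq a (t + 1) < rowSeq a t ↔ ∑ i, a i - (t + 1) ∈ Set.range (psum a) := by
  have hle := fun k => le_rowSeq_iff (b := a) (k := k) (t := t) (by omega)
  have hle' := fun k => le_rowSeq_iff (k := k) ht
  refine ⟨fun h => ⟨rowSeq a t, ?_⟩, fun ⟨k, hk⟩ => ?_⟩
  · have h1 := (hle _).1 le_rfl
    have h2 := (hle' _).not.1 h.not_ge
    omega
  · exact (not_le.1 ((hle' k).not.2 (by omega))).trans_le ((hle k).2 (by omega))

theorem refines_flat_iff_rowSeq (hab : ∑ i, b i = ∑ i, a i) :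
    Refines (flat b) (flat a) ↔ ∀ t, t + 1 < ∑ i, a i →
      rowSeq a (t + 1) < rowSeq a t → rowSeq b (t + 1) < rowSeq b t := by
  rw [refines_flat_iff, and_iff_right hab]
  refine ⟨fun h t ht => ?_, fun h => ?_⟩
  · rw [rowSeq_succ_lt_iff ht, rowSeq_succ_lt_iff (hab ▸ ht), hab]
    exact fun hx => h hx
  · rintro x ⟨k, rfl⟩
    have hle : psum a k ≤ ∑ i, a i := psum_of_le a (le_max_right k n) ▸
      psum_mono a (le_max_left k n)
    rcases Nat.eq_zero_or_pos (psum a k) with h0 | hpos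
    · exact ⟨0, by rw [psum_zero, h0]⟩
    rcases hle.eq_or_lt with hsum | hlt
    · exact ⟨n, by rw [psum_of_le b le_rfl, hab, hsum]⟩
    have hx : ∑ i, a i - (∑ i, a i - psum a k - 1 + 1) = psum a k := by omega
    have hb := h (∑ i, a i - psum a k - 1) (by omega)
    rw [rowSeq_succ_lt_iff (by omega), rowSeq_succ_lt_iff (by omega), hab, hx] at hb
    exact hb ⟨k, rfl⟩

end RowSeq

section WtFin

variable {n t : ℕ} {P : Finset (ℕ × ℕ)}

theorem sum_wtFin (hP : ∀ p ∈ P, p.1 < n) : ∑ i, wtFin n P i = P.card := by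
  have hempty : rowsFrom P n = ∅ := Finset.filter_false_of_mem fun p hp => (hP p hp).not_ge
  rw [← psum_of_le (wtFin n P) le_rfl, ← card_rowsFrom_add P n, hempty, Finset.card_empty,
    add_zero]
  exact psum_eq_sum_range (rowWt P) le_rfl

theorem rowSeq_wtFin (hP : ∀ p ∈ P, p.1 < n) (ht : t < (crossList P).length) :
    rowSeq (wtFin n P) t = (crossList P)[t].1 := by
  have ht' : t < ∑ i, wtFin n P i := by rwa [sum_wtFin hP, ← length_crossList]
  refine eq_of_forall_le_iff fun k => ?_
  rcases le_or_gt k n with hk | hk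
  · have hcard := card_rowsFrom_add P k
    rw [← psum_eq_sum_range (rowWt P) hk] at hcard
    rw [le_rowSeq_iff ht', le_fst_getElem_crossList_iff, sum_wtFin hP, ← hcard]
    exact add_comm t _ ▸ Nat.add_lt_add_iff_left
  · have h1 := rowSeq_lt ht'
    have h2 := hP _ (mem_crossList.1 (List.getElem_mem ht))
    omega

end WtFin

/-! ### Pipe dreams with a given reading word -/

/-- `s` is a possible sequence of rows, in reading order, for the crosses of a pipe dream with
reading word `r`; the `t`-th cross then lies in column `r.getD t 0 - s t`. -/
structure IsCompatible (r : List ℕ) (s : ℕ → ℕ) : Prop where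
  le_getD : ∀ t < r.length, s t ≤ r.getD t 0
  succ_le : ∀ t, t + 1 < r.length → s (t + 1) ≤ s t
  succ_lt : ∀ t, t + 1 < r.length → r.getD (t + 1) 0 ≤ r.getD t 0 → s (t + 1) < s t

/-- The crosses lying in the rows `s` and recording the letters of `r`. -/
def placeRows (r : List ℕ) (s : ℕ → ℕ) : Finset (ℕ × ℕ) :=
  (Finset.range r.length).image fun t => (s t, r.getD t 0 - s t)

/-- The pointwise largest row sequence compatible with `r`, provided there is one. -/
def maxRow (r : List ℕ) : ℕ → ℕ
  | 0 => r.getD 0 0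
  | t + 1 =>
    if r.getD t 0 < r.getD (t + 1) 0 then maxRow r t else min (r.getD (t + 1) 0) (maxRow r t - 1)

/-- The pipe dream with reading word `r` all of whose crosses are as high as possible. -/
def highestPD (r : List ℕ) : Finset (ℕ × ℕ) := placeRows r (maxRow r)

section Compatible

variable {n t : ℕ} {r : List ℕ} {s : ℕ → ℕ} {P : Finset (ℕ × ℕ)} {b : Fin n → ℕ}

theorem IsCompatible.crossList_placeRows (h : IsCompatible r s) :
    crossList (placeRows r s) = (List.range r.length).map fun t => (s t, r.getD t 0 - s t) := by
  refine crossList_eq (List.isChain_iff_pairwise.1 ?_) (by simp [placeRows])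
  refine List.isChain_iff_getElem.2 fun t ht => ?_
  simp only [List.length_map, List.length_range] at ht
  have h1 := h.le_getD t (by omega)
  have h2 := h.le_getD (t + 1) ht
  have h3 := h.succ_le t ht
  have h4 := h.succ_lt t ht
  simp only [List.getElem_map, List.getElem_range, Prod.lex_def]
  omega

theorem IsCompatible.readWord_placeRows (h : IsCompatible r s) :
    readWord (placeRows r s) = r := by
  rw [readWord_eq_map_crossList, h.crossList_placeRows, List.map_map]
  refine List.ext_getElem (by simp) fun t h1 h2 => ?_
  have hle := h.le_getD t h2
  rw [List.getD_eq_getElem _ _ h2] at hle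
  simpa [h2] using Nat.add_sub_cancel' hle

theorem IsCompatible.card_placeRows (h : IsCompatible r s) : (placeRows r s).card = r.length := by
  rw [← length_readWord, h.readWord_placeRows]

theorem IsCompatible.rowSeq_wtFin_placeRows (h : IsCompatible r s)
    (hP : ∀ p ∈ placeRows r s, p.1 < n) (ht : t < r.length) :
    rowSeq (wtFin n (placeRows r s)) t = s t := by
  rw [rowSeq_wtFin hP (by simpa [h.crossList_placeRows] using ht)]
  simp only [h.crossList_placeRows, List.getElem_map, List.getElem_range]

theorem IsCompatible.wtFin_placeRows_rowSeq (h : IsCompatible r (rowSeq b))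
    (hb : ∑ i, b i = r.length) : wtFin n (placeRows r (rowSeq b)) = b := by
  have hP : ∀ p ∈ placeRows r (rowSeq b), p.1 < n := by
    simp only [placeRows, Finset.mem_image, Finset.mem_range]
    rintro _ ⟨t, ht, rfl⟩
    exact rowSeq_lt (hb ▸ ht)
  refine eq_of_rowSeq_eq (by rw [sum_wtFin hP, h.card_placeRows, hb]) fun t ht => ?_
  exact h.rowSeq_wtFin_placeRows hP (hb ▸ ht)

theorem getD_readWord (ht : t < (crossList P).length) :
    (readWord P).getD t 0 = (crossList P)[t].1 + (crossList P)[t].2 := by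
  simp [readWord_eq_map_crossList, ht]

theorem isCompatible_rowSeq (hP : ∀ p ∈ P, p.1 < n) :
    IsCompatible (readWord P) (rowSeq (wtFin n P)) := by
  have hlen : (readWord P).length = (crossList P).length := by
    rw [length_readWord, length_crossList]
  have hlex : ∀ t (ht : t + 1 < (crossList P).length),
      ReadsBefore (crossList P)[t] (crossList P)[t + 1] := fun t ht =>
    List.pairwise_iff_getElem.1 (pairwise_crossList P) t (t + 1) (by omega) ht (by omega)
  refine ⟨fun t ht => ?_, fun t ht => ?_, fun t ht hle => ?_⟩ <;> rw [hlen] at ht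
  · rw [rowSeq_wtFin hP ht, getD_readWord ht]
    exact Nat.le_add_right _ _
  · have h := Prod.lex_def.1 (hlex t ht)
    rw [rowSeq_wtFin hP ht, rowSeq_wtFin hP (by omega)]
    omega
  · have h := Prod.lex_def.1 (hlex t ht)
    rw [getD_readWord ht, getD_readWord (by omega)] at hle
    rw [rowSeq_wtFin hP ht, rowSeq_wtFin hP (by omega)]
    omega

theorem placeRows_readWord_rowSeq (hP : ∀ p ∈ P, p.1 < n) :
    placeRows (readWord P) (rowSeq (wtFin n P)) = P := by
  ext p
  rw [← mem_crossList, (isCompatible_rowSeq hP).crossList_placeRows, ← mem_crossList (P := P)]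
  congr! 1
  refine List.ext_getElem (by simp [length_readWord, length_crossList]) fun t _ ht => ?_
  simp [rowSeq_wtFin hP ht, readWord_eq_map_crossList, ht]

theorem maxRow_le_getD (r : List ℕ) (t : ℕ) : maxRow r t ≤ r.getD t 0 := by
  induction t with
  | zero => exact le_rfl
  | succ t ih =>
    rw [maxRow]
    split_ifs <;> omega

theorem getD_succ_le_of_maxRow_lt (h : maxRow r (t + 1) < maxRow r t) :
    r.getD (t + 1) 0 ≤ r.getD t 0 := by
  by_contra! hlt
  rw [maxRow, if_pos hlt] at h
  exact lt_irrefl _ h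

theorem IsCompatible.le_maxRow (h : IsCompatible r s) (ht : t < r.length) : s t ≤ maxRow r t := by
  induction t with
  | zero => exact h.le_getD 0 ht
  | succ t ih =>
    have h1 := h.le_getD _ ht
    have h2 := h.succ_le t ht
    have h3 := h.succ_lt t ht
    have h4 := ih (by omega)
    rw [maxRow]
    split_ifs <;> omega

theorem IsCompatible.maxRow (h : IsCompatible r s) : IsCompatible r (maxRow r) := by
  refine ⟨fun t _ => maxRow_le_getD r t, fun t _ => ?_, fun t ht hle => ?_⟩
  · rw [SlidePaper.maxRow]
    split_ifs <;> omega
  · have h1 := h.le_maxRow (t := t) (by omega)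
    have h2 := h.succ_lt t ht hle
    rw [SlidePaper.maxRow, if_neg hle.not_gt]
    omega

theorem fst_lt_of_readWord_head? (hr : ∀ a ∈ (readWord P).head?, a < n) :
    ∀ p ∈ P, p.1 < n := by
  intro p hp
  rw [← mem_crossList] at hp
  have hpair := pairwise_crossList P
  rw [readWord_eq_map_crossList] at hr
  generalize crossList P = L at hp hpair hr
  rcases L with _ | ⟨q, l⟩
  · exact absurd hp List.not_mem_nil
  have hq : q.1 + q.2 < n := hr _ rfl
  rcases List.mem_cons.1 hp with rfl | hp
  · omega
  · have := Prod.lex_def.1 (List.rel_of_pairwise_cons hpair hp)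
    omega

theorem isCompatible_rowSeq_iff (h : IsCompatible r s) (hr : ∀ a ∈ r.head?, a < n)
    (hb : ∑ i, b i = r.length) :
    IsCompatible r (rowSeq b) ↔ Dominates b (wtFin n (highestPD r)) ∧
      Refines (flat b) (flat (wtFin n (highestPD r))) := by
  have hmax := h.maxRow
  have hP : ∀ p ∈ highestPD r, p.1 < n :=
    fst_lt_of_readWord_head? (by rwa [highestPD, hmax.readWord_placeRows])
  have hsum : ∑ i, wtFin n (highestPD r) i = r.length := by
    rw [sum_wtFin hP, highestPD, hmax.card_placeRows]
  have hrow : ∀ t < r.length, rowSeq (wtFin n (highestPD r)) t = maxRow r t := fun t ht =>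
    hmax.rowSeq_wtFin_placeRows hP ht
  rw [dominates_iff_rowSeq_le (hb.trans hsum.symm), refines_flat_iff_rowSeq (hb.trans hsum.symm),
    hsum]
  refine ⟨fun hc => ⟨fun t ht => ?_, fun t ht hlt => ?_⟩, fun ⟨hdom, href⟩ => ⟨fun t ht => ?_,
    fun t ht => rowSeq_succ_le (hb ▸ ht), fun t ht hle => href t ht ?_⟩⟩
  · exact hrow t ht ▸ hc.le_maxRow ht
  · rw [hrow _ ht, hrow t (by omega)] at hlt
    exact hc.succ_lt t ht (getD_succ_le_of_maxRow_lt hlt)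
  · exact (hrow t ht ▸ hdom t ht).trans (maxRow_le_getD r t)
  · rw [hrow _ ht, hrow t (by omega)]
    exact hmax.succ_lt t ht hle

theorem mem_wcFinset_sum (b : Fin n → ℕ) : b ∈ wcFinset n (∑ i, b i) :=
  Fintype.mem_piFinset.2 fun i => Finset.mem_range.2 <| Nat.lt_succ_of_le <|
    Finset.single_le_sum (fun _ _ => Nat.zero_le _) (Finset.mem_univ i)

theorem dominates_refines_wtFin_highestPD (hr : ∀ a ∈ (readWord P).head?, a < n) :
    Dominates (wtFin n P) (wtFin n (highestPD (readWord P))) ∧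
      Refines (flat (wtFin n P)) (flat (wtFin n (highestPD (readWord P)))) := by
  have hP := fst_lt_of_readWord_head? hr
  exact (isCompatible_rowSeq_iff (isCompatible_rowSeq hP) hr
    (by rw [sum_wtFin hP, length_readWord])).1 (isCompatible_rowSeq hP)

theorem readWord_highestPD (P : Finset (ℕ × ℕ)) : readWord (highestPD (readWord P)) = readWord P :=
  (isCompatible_rowSeq fun _ hp => Nat.lt_succ_of_le
    (Finset.le_sup (f := Prod.fst) hp)).maxRow.readWord_placeRows

theorem exists_wtFin_eq (hr : ∀ a ∈ (readWord P).head?, a < n)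
    (hdom : Dominates b (wtFin n (highestPD (readWord P))))
    (href : Refines (flat b) (flat (wtFin n (highestPD (readWord P))))) :
    ∃ Q, readWord Q = readWord P ∧ wtFin n Q = b := by
  have hb : ∑ i, b i = (readWord P).length := by
    rw [(refines_flat_iff.1 href).1, sum_wtFin (fst_lt_of_readWord_head? ?_), ← length_readWord,
      readWord_highestPD]
    rwa [readWord_highestPD]
  have hc := (isCompatible_rowSeq_iff (isCompatible_rowSeq (fst_lt_of_readWord_head? hr)) hr hb).2
    ⟨hdom, href⟩
  exact ⟨_, hc.readWord_placeRows, hc.wtFin_placeRows_rowSeq hb⟩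

theorem sum_monomial_wtFin_eq_slideF {F : Finset (Finset (ℕ × ℕ))}
    (hr : ∀ a ∈ (readWord P).head?, a < n) (hF : ∀ Q, Q ∈ F ↔ readWord Q = readWord P) :
    ∑ Q ∈ F, (MvPolynomial.monomial (Finsupp.equivFunOnFinite.symm (wtFin n Q)) 1 :
      MvPolynomial (Fin n) ℤ) = slideF (wtFin n (highestPD (readWord P))) := by
  refine Finset.sum_nbij (wtFin n) (fun Q hQ => ?_) (fun Q hQ Q' hQ' hwt => ?_)
    (fun b hb => ?_) fun _ _ => rfl
  · rw [hF] at hQ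
    have h := dominates_refines_wtFin_highestPD (P := Q) (hQ ▸ hr)
    rw [hQ] at h
    exact Finset.mem_filter.2 ⟨(refines_flat_iff.1 h.2).1 ▸ mem_wcFinset_sum _, h⟩
  · rw [Finset.mem_coe, hF] at hQ hQ'
    have hplace := placeRows_readWord_rowSeq (fst_lt_of_readWord_head? (P := Q) (hQ ▸ hr))
    have hplace' := placeRows_readWord_rowSeq (fst_lt_of_readWord_head? (P := Q') (hQ' ▸ hr))
    rw [← hplace, ← hplace', hwt, hQ, hQ']
  · obtain ⟨-, hdom, href⟩ := Finset.mem_filter.1 hb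
    obtain ⟨Q, hQ, hwt⟩ := exists_wtFin_eq hr hdom href
    exact ⟨Q, (hF Q).2 hQ, hwt⟩

end Compatible

/-! ### Inversions and reduced words -/

/-- The inversions of `w`, whose number is its Coxeter length `invCount w`. -/
def inversions (w : Equiv.Perm ℕ) : Set (ℕ × ℕ) := {p | p.1 < p.2 ∧ w p.2 < w p.1}

section Words

variable {v : Equiv.Perm ℕ} {l l' : List ℕ} {a k N x : ℕ}

theorem inversions_one : inversions 1 = ∅ :=
  Set.eq_empty_of_forall_notMem fun _ hp => hp.1.asymm hp.2

theorem inversions_swap_mul (h : v.symm a < v.symm (a + 1)) :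
    inversions (Equiv.swap a (a + 1) * v) =
      insert (v.symm a, v.symm (a + 1)) (inversions v) := by
  ext ⟨p, q⟩
  obtain ⟨x, rfl⟩ := v.symm.surjective p
  obtain ⟨y, rfl⟩ := v.symm.surjective q
  simp only [inversions, Set.mem_ofPred_eq, Set.mem_insert_iff, Prod.mk.injEq,
    EmbeddingLike.apply_eq_iff_eq, Equiv.Perm.mul_apply, Equiv.apply_symm_apply,
    Equiv.swap_apply_def]
  grind

theorem inversions_swap_mul_subset (h : v.symm (a + 1) < v.symm a) :
    inversions (Equiv.swap a (a + 1) * v) ⊆ inversions v := by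
  have hsymm : ∀ x, (Equiv.swap a (a + 1) * v).symm x = v.symm (Equiv.swap a (a + 1) x) :=
    fun x => by rw [Equiv.symm_apply_eq]; simp
  have hins := inversions_swap_mul (v := Equiv.swap a (a + 1) * v) (a := a) (by simpa [hsymm])
  rw [← mul_assoc, Equiv.swap_mul_self, one_mul] at hins
  exact hins ▸ Set.subset_insert _ _

theorem wordPerm_nil : wordPerm [] = 1 := rfl

theorem wordPerm_singleton (a : ℕ) : wordPerm [a] = Equiv.swap a (a + 1) := by simp [wordPerm]

theorem wordPerm_append (l l' : List ℕ) : wordPerm (l ++ l') = wordPerm l' * wordPerm l := by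
  simp [wordPerm]

theorem wordPerm_concat (l : List ℕ) (a : ℕ) :
    wordPerm (l ++ [a]) = Equiv.swap a (a + 1) * wordPerm l := by
  rw [wordPerm_append, wordPerm_singleton]

theorem wordPerm_apply_of_forall_ne (h : ∀ a ∈ l, x ≠ a ∧ x ≠ a + 1) : wordPerm l x = x := by
  induction l using List.reverseRecOn with
  | nil => rfl
  | append_singleton l a ih =>
    simp only [List.mem_append, List.mem_singleton, or_imp, forall_and, forall_eq] at h
    rw [wordPerm_concat, Equiv.Perm.mul_apply, ih fun b hb => ⟨h.1.1 b hb, h.2.1 b hb⟩,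
      Equiv.swap_apply_of_ne_of_ne h.1.2 h.2.2]

theorem wordPerm_apply_of_lt (h : ∀ a ∈ l, k ≤ a) (hx : x < k) : wordPerm l x = x :=
  wordPerm_apply_of_forall_ne fun a ha => by
    have := h a ha
    omega

theorem wordPerm_apply_of_le (h : ∀ a ∈ l, a + 1 < N) (hx : N ≤ x) : wordPerm l x = x :=
  wordPerm_apply_of_forall_ne fun a ha => by
    have := h a ha
    omega

theorem exists_forall_le_wordPerm_apply (l : List ℕ) :
    ∃ N, ∀ x, N ≤ x → wordPerm l x = x :=
  ⟨l.sum + 2, fun _ => wordPerm_apply_of_le fun a ha => by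
    have := List.le_sum_of_mem ha
    omega⟩

theorem finite_inversions_wordPerm (l : List ℕ) : (inversions (wordPerm l)).Finite := by
  induction l using List.reverseRecOn with
  | nil => exact inversions_one ▸ Set.finite_empty
  | append_singleton l a ih =>
    rw [wordPerm_concat]
    rcases lt_or_gt_of_ne ((wordPerm l).symm.injective.ne a.lt_succ_self.ne) with h | h
    · exact inversions_swap_mul h ▸ ih.insert _
    · exact ih.subset (inversions_swap_mul_subset h)

theorem invCount_wordPerm_concat_le (h : (wordPerm l).symm (a + 1) < (wordPerm l).symm a) :
    invCount (wordPerm (l ++ [a])) ≤ invCount (wordPerm l) := by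
  rw [wordPerm_concat]
  exact Set.ncard_le_ncard (inversions_swap_mul_subset h) (finite_inversions_wordPerm l)

theorem invCount_wordPerm_le (l : List ℕ) : invCount (wordPerm l) ≤ l.length := by
  induction l using List.reverseRecOn with
  | nil =>
    change (inversions 1).ncard ≤ 0
    rw [inversions_one, Set.ncard_empty]
  | append_singleton l a ih =>
    rw [List.length_append, List.length_singleton]
    rcases lt_or_gt_of_ne ((wordPerm l).symm.injective.ne a.lt_succ_self.ne) with h | h
    · rw [wordPerm_concat]
      change (inversions _).ncard ≤ _
      rw [inversions_swap_mul h]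
      exact (Set.ncard_insert_le _ _).trans (Nat.succ_le_succ ih)
    · exact (invCount_wordPerm_concat_le h).trans (ih.trans (Nat.le_succ _))

theorem IsReducedWord.of_prefix (h : IsReducedWord l') (hl : l <+: l') : IsReducedWord l := by
  obtain ⟨r, rfl⟩ := hl
  intro l'' hl''
  simpa using h (l'' ++ r) (by rw [wordPerm_append, wordPerm_append, hl''])

end Words

/-! ### The left-justified pipe dream -/

/-- The crosses filling the first `c i` columns of each row `i < N`. -/
def leftJustified (c : ℕ → ℕ) (N : ℕ) : Finset (ℕ × ℕ) :=
  (Finset.range N).biUnion fun i => (Finset.range (c i)).image (Prod.mk i)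

/-- The bottom pipe dream of `w`, for `w` fixing all `i ≥ N`: its row weights are the Lehmer
code of `w`. -/
noncomputable def bottomPD (w : Equiv.Perm ℕ) (N : ℕ) : Finset (ℕ × ℕ) :=
  leftJustified (lehmer w) N

/-- The permutation left of `w`, fixing all `i < m`, after removing the `lehmer w m` crosses in
row `m` of its bottom pipe dream. -/
noncomputable def peelRow (w : Equiv.Perm ℕ) (m : ℕ) : Equiv.Perm ℕ :=
  (wordPerm (List.range' m (lehmer w m)))⁻¹ * w

section BottomPD

variable {w v : Equiv.Perm ℕ} {c : ℕ → ℕ} {i m N x y : ℕ} {p : ℕ × ℕ}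

theorem apply_lt_of_fixed (hw : ∀ i, N ≤ i → w i = i) (hx : x < N) : w x < N := by
  by_contra! h
  exact hx.not_ge (w.injective (hw _ h) ▸ h)

theorem le_apply_of_fixed (hw : ∀ i < m, w i = i) (hx : m ≤ x) : m ≤ w x := by
  by_contra! h
  exact h.not_ge (hx.trans_eq (w.injective (hw _ h)).symm)

theorem snd_lt_of_mem_inversions (hw : ∀ i, N ≤ i → w i = i) (hp : p ∈ inversions w) :
    p.2 < N := by
  by_contra! h
  have hlt : w p.2 < w p.1 := hp.2
  rw [hw _ h] at hlt
  have := w.injective (hw (w p.1) (h.trans hlt.le))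
  have := hp.1
  omega

theorem le_fst_of_mem_inversions (hw : ∀ i < m, w i = i) (hp : p ∈ inversions w) : m ≤ p.1 := by
  by_contra! h
  have hlt : w p.2 < w p.1 := hp.2
  rw [hw _ h] at hlt
  have := w.injective (hw (w p.2) (hlt.trans h))
  have := hp.1
  omega

theorem lehmer_eq_zero (h : ∀ j, i < j → w i < w j) : lehmer w i = 0 := by
  rw [lehmer, Set.eq_empty_of_forall_notMem (s := {j | i < j ∧ w j < w i})
    fun j hj => (h j hj.1).asymm hj.2, Set.ncard_empty]

theorem lehmer_eq_zero_of_fixed (hw : ∀ i, N ≤ i → w i = i) (hi : N ≤ i) : lehmer w i = 0 :=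
  lehmer_eq_zero fun j hj => by rwa [hw i hi, hw j (hi.trans hj.le)]

theorem lehmer_congr (h : ∀ j, i < j → (w j < w i ↔ v j < v i)) : lehmer w i = lehmer v i := by
  unfold lehmer
  congr! 3 with j
  exact and_congr_right (h j)

theorem image_setOf_lt_apply (hw : ∀ i < m, w i = i) :
    w '' {j | m < j ∧ w j < w m} = Set.Ico m (w m) := by
  ext y
  obtain ⟨j, rfl⟩ := w.surjective y
  simp only [w.injective.mem_set_image, Set.mem_ofPred_eq, Set.mem_Ico]
  refine ⟨fun h => ⟨le_apply_of_fixed hw h.1.le, h.2⟩, fun h => ⟨?_, h.2⟩⟩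
  rcases lt_trichotomy m j with hj | rfl | hj
  · exact hj
  · exact absurd h.2 (lt_irrefl _)
  · exact absurd (hw j hj ▸ h.1) hj.not_ge

theorem apply_eq_add_lehmer (hw : ∀ i < m, w i = i) : w m = m + lehmer w m := by
  rw [lehmer, ← Set.ncard_image_of_injective _ w.injective, image_setOf_lt_apply hw,
    ← Finset.coe_Ico, Set.ncard_coe_finset, Nat.card_Ico,
    Nat.add_sub_cancel' (le_apply_of_fixed hw le_rfl)]

theorem wordPerm_range'_apply (m k x : ℕ) :
    wordPerm (List.range' m k) x =
      if x < m then x else if x = m then m + k else if x ≤ m + k then x - 1 else x := by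
  induction k with
  | zero =>
    rw [List.range'_zero, wordPerm_nil, Equiv.Perm.one_apply]
    split_ifs <;> omega
  | succ k ih =>
    rw [List.range'_1_concat, wordPerm_concat, Equiv.Perm.mul_apply, ih, Equiv.swap_apply_def]
    split_ifs <;> omega

theorem wordPerm_range'_peelRow (w : Equiv.Perm ℕ) (m x : ℕ) :
    wordPerm (List.range' m (lehmer w m)) (peelRow w m x) = w x := by
  simp [peelRow]

theorem peelRow_eq_of_eq (h : w x = wordPerm (List.range' m (lehmer w m)) y) :
    peelRow w m x = y := by
  simp [peelRow, h]

theorem peelRow_apply_of_le (hw : ∀ i < m, w i = i) (hx : x ≤ m) : peelRow w m x = x := by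
  apply peelRow_eq_of_eq
  rw [wordPerm_range'_apply]
  rcases hx.lt_or_eq with hx | rfl
  · rw [if_pos hx, hw x hx]
  · simp [apply_eq_add_lehmer hw]

theorem peelRow_apply_of_ge (hw : ∀ i < m, w i = i) (hN : ∀ i, N ≤ i → w i = i) (hm : m < N)
    (hx : N ≤ x) : peelRow w m x = x := by
  have hlt := apply_lt_of_fixed hN hm
  rw [apply_eq_add_lehmer hw] at hlt
  apply peelRow_eq_of_eq
  rw [wordPerm_range'_apply, hN x hx]
  split_ifs <;> omega

theorem lehmer_peelRow (hw : ∀ i < m, w i = i) (hi : m < i) :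
    lehmer (peelRow w m) i = lehmer w i := by
  have hfix : ∀ x < m + 1, peelRow w m x = x := fun x hx =>
    peelRow_apply_of_le hw (Nat.lt_succ_iff.1 hx)
  refine lehmer_congr fun j hj => ?_
  have hi' := le_apply_of_fixed hfix hi
  have hj' := le_apply_of_fixed hfix (hi.trans hj)
  rw [← wordPerm_range'_peelRow w m i, ← wordPerm_range'_peelRow w m j, wordPerm_range'_apply,
    wordPerm_range'_apply]
  split_ifs <;> omega

theorem mem_leftJustified : p ∈ leftJustified c N ↔ p.1 < N ∧ p.2 < c p.1 := by
  obtain ⟨i, j⟩ := p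
  simp [leftJustified]

theorem filter_fst_leftJustified (hi : N ≤ i → c i = 0) :
    (leftJustified c N).filter (·.1 = i) = (Finset.range (c i)).image (Prod.mk i) := by
  ext ⟨a, b⟩
  simp only [Finset.mem_filter, mem_leftJustified, Finset.mem_image, Finset.mem_range,
    Prod.mk.injEq, exists_eq_right_right]
  grind

theorem rowWt_leftJustified (hi : N ≤ i → c i = 0) : rowWt (leftJustified c N) i = c i := by
  rw [rowWt, filter_fst_leftJustified hi,
    Finset.card_image_of_injective _ (Prod.mk_right_injective i), Finset.card_range]

theorem readWord_image_range (i k : ℕ) :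
    readWord ((Finset.range k).image (Prod.mk i)) = List.range' i k := by
  rw [readWord_eq_map_crossList, crossList_eq (l := (List.range k).map (Prod.mk i)) _ (by simp),
    List.map_map, List.range'_eq_map_range]
  · rfl
  · exact List.pairwise_map.2 (List.pairwise_lt_range.imp (Prod.Lex.right i))

theorem wordPerm_readWord_rowsFrom_leftJustified (hmN : m ≤ N) (hw : ∀ i < m, w i = i)
    (hN : ∀ i, N ≤ i → w i = i) (hc : ∀ i, m ≤ i → lehmer w i = c i) :
    wordPerm (readWord (rowsFrom (leftJustified c N) m)) = w := by
  induction hd : N - m generalizing m w with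
  | zero =>
    have hempty : rowsFrom (leftJustified c N) m = ∅ := Finset.filter_eq_empty_iff.2 fun p hp => by
      have := (mem_leftJustified.1 hp).1
      omega
    rw [hempty]
    ext i
    rcases lt_or_ge i m with h | h
    · exact (hw i h).symm
    · exact (hN i (by omega)).symm
  | succ d ih =>
    have hpeel : wordPerm (readWord (rowsFrom (leftJustified c N) (m + 1))) = peelRow w m :=
      ih (by omega) (fun i hi => peelRow_apply_of_le hw (Nat.lt_succ_iff.1 hi))
        (fun i hi => peelRow_apply_of_ge hw hN (by omega) hi)
        (fun i hi => (lehmer_peelRow hw hi).trans (hc i (Nat.le_of_succ_le hi))) (by omega)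
    rw [readWord_rowsFrom, filter_fst_leftJustified (by omega), readWord_image_range,
      wordPerm_append, hpeel, ← hc m le_rfl]
    exact Equiv.ext (wordPerm_range'_peelRow w m)

theorem wordPerm_readWord_bottomPD (hN : ∀ i, N ≤ i → w i = i) :
    wordPerm (readWord (bottomPD w N)) = w := by
  have h := wordPerm_readWord_rowsFrom_leftJustified (c := lehmer w) N.zero_le (by simp) hN
    fun _ _ => rfl
  rwa [rowsFrom, Finset.filter_true_of_mem fun p _ => p.1.zero_le] at h

theorem rowWt_bottomPD (hN : ∀ i, N ≤ i → w i = i) (i : ℕ) :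
    rowWt (bottomPD w N) i = lehmer w i :=
  rowWt_leftJustified (lehmer_eq_zero_of_fixed hN)

theorem lehmer_eq_rowWt (hI : (inversions w).Finite) (i : ℕ) :
    lehmer w i = rowWt hI.toFinset i := by
  rw [lehmer, rowWt, ← Set.ncard_coe_finset,
    ← Set.ncard_image_of_injective {j | i < j ∧ w j < w i} (Prod.mk_right_injective i)]
  congr 1
  ext ⟨a, b⟩
  simp only [Set.mem_image, Set.mem_ofPred_eq, Prod.mk.injEq, exists_eq_right_right,
    Finset.coe_filter, Set.Finite.mem_toFinset, inversions]
  grind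

theorem sum_lehmer_add (hI : (inversions w).Finite) (k : ℕ) :
    ∑ i ∈ Finset.range k, lehmer w i + (rowsFrom hI.toFinset k).card = invCount w := by
  simp only [lehmer_eq_rowWt hI]
  exact (card_rowsFrom_add _ k).trans (Set.ncard_eq_toFinset_card _ hI).symm

theorem card_bottomPD (hN : ∀ i, N ≤ i → w i = i) : (bottomPD w N).card = invCount w := by
  have hI : (inversions w).Finite := wordPerm_readWord_bottomPD hN ▸ finite_inversions_wordPerm _
  have hB : rowsFrom (bottomPD w N) N = ∅ := Finset.filter_eq_empty_iff.2 fun p hp =>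
    (mem_leftJustified.1 hp).1.not_ge
  have hI' : rowsFrom hI.toFinset N = ∅ := Finset.filter_eq_empty_iff.2 fun p hp => by
    have hp := hI.mem_toFinset.1 hp
    exact (hp.1.trans (snd_lt_of_mem_inversions hN hp)).not_ge
  rw [← card_rowsFrom_add _ N, hB, ← sum_lehmer_add hI N, hI']
  simp only [rowWt_bottomPD hN]

theorem isReducedWord_iff {l : List ℕ} : IsReducedWord l ↔ invCount (wordPerm l) = l.length := by
  refine ⟨fun h => (invCount_wordPerm_le l).antisymm ?_, fun h l' hl' => ?_⟩
  · obtain ⟨N, hN⟩ := exists_forall_le_wordPerm_apply l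
    simpa [length_readWord, card_bottomPD hN] using h _ (wordPerm_readWord_bottomPD hN)
  · rw [← h, ← hl']
    exact invCount_wordPerm_le l'

theorem isPD_bottomPD (hN : ∀ i, N ≤ i → w i = i) : IsPD w (bottomPD w N) :=
  ⟨wordPerm_readWord_bottomPD hN, isReducedWord_iff.2 <| by
    rw [wordPerm_readWord_bottomPD hN, length_readWord, card_bottomPD hN]⟩

end BottomPD

/-! ### Weights of pipe dreams against the Lehmer code -/

section Weights

variable {n i j k N a : ℕ} {w : Equiv.Perm ℕ} {l l' : List ℕ} {P : Finset (ℕ × ℕ)}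

theorem IsReducedWord.inversions_concat (h : IsReducedWord (l ++ [a])) :
    inversions (wordPerm (l ++ [a])) =
      insert ((wordPerm l).symm a, (wordPerm l).symm (a + 1)) (inversions (wordPerm l)) := by
  rcases lt_or_gt_of_ne ((wordPerm l).symm.injective.ne a.lt_succ_self.ne) with hlt | hgt
  · rw [wordPerm_concat, inversions_swap_mul hlt]
  · have hle := (invCount_wordPerm_concat_le hgt).trans (invCount_wordPerm_le l)
    rw [isReducedWord_iff.1 h, List.length_append, List.length_singleton] at hle
    exact absurd hle (Nat.not_succ_le_self _)

theorem IsReducedWord.inversions_subset_of_prefix (h : IsReducedWord l') (hl : l <+: l') :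
    inversions (wordPerm l) ⊆ inversions (wordPerm l') := by
  obtain ⟨r, rfl⟩ := hl
  induction r using List.reverseRecOn with
  | nil => rw [List.append_nil]
  | append_singleton r a ih =>
    rw [← List.append_assoc] at h ⊢
    rw [h.inversions_concat]
    exact (ih (h.of_prefix (List.prefix_append _ _))).trans (Set.subset_insert _ _)

theorem IsReducedWord.apply_succ_lt_of_mem_head? (h : IsReducedWord l) (ha : a ∈ l.head?) :
    wordPerm l (a + 1) < wordPerm l a := by
  have hprefix : [a] <+: l := by
    rw [← List.cons_head?_tail ha]
    exact List.prefix_append [a] _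
  have hmem : (a, a + 1) ∈ inversions (wordPerm [a]) := by
    simp [inversions, wordPerm_singleton]
  exact (h.inversions_subset_of_prefix hprefix hmem).2

theorem IsReducedWord.succ_lt_of_mem (h : IsReducedWord l)
    (hN : ∀ p ∈ inversions (wordPerm l), p.2 < N) : ∀ a ∈ l, a + 1 < N := by
  induction l using List.reverseRecOn with
  | nil => exact fun _ ha => absurd ha List.not_mem_nil
  | append_singleton l a ih =>
    rw [h.inversions_concat] at hN
    have hl := ih (h.of_prefix (List.prefix_append _ _)) fun p hp =>
      hN p (Set.mem_insert_of_mem _ hp)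
    intro b hb
    rcases List.mem_append.1 hb with hb | hb
    · exact hl b hb
    · rw [List.mem_singleton.1 hb]
      by_contra! hle
      have hlt : (wordPerm l).symm (a + 1) < N := hN _ (Set.mem_insert _ _)
      rw [(Equiv.symm_apply_eq _).2 (wordPerm_apply_of_le hl hle).symm] at hlt
      exact hlt.not_ge hle

theorem IsPD.finite_inversions (hP : IsPD w P) : (inversions w).Finite :=
  hP.1 ▸ finite_inversions_wordPerm _

theorem IsPD.card_eq (hP : IsPD w P) : P.card = invCount w := by
  rw [← length_readWord, ← isReducedWord_iff.1 hP.2, hP.1]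

theorem finite_setOf_isPD (hN : ∀ i, N ≤ i → w i = i) : {P | IsPD w P}.Finite := by
  refine ((Finset.range N ×ˢ Finset.range N).powerset.finite_toSet).subset fun P hP => ?_
  refine Finset.mem_coe.2 (Finset.mem_powerset.2 fun p hp => ?_)
  have hlt := hP.2.succ_lt_of_mem (fun q hq => snd_lt_of_mem_inversions hN (hP.1 ▸ hq)) _
    (mem_readWord.2 ⟨p, hp, rfl⟩)
  simp only [Finset.mem_product, Finset.mem_range]
  omega

theorem wordPerm_readWord_rowsFrom_apply {x : ℕ} (hx : x < k) :
    wordPerm (readWord (rowsFrom P k)) x = x :=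
  wordPerm_apply_of_lt (fun _ => le_of_mem_readWord_rowsFrom) hx

theorem IsPD.inversions_rowsFrom_subset (hP : IsPD w P) (k : ℕ) :
    inversions (wordPerm (readWord (rowsFrom P k))) ⊆
      rowsFrom hP.finite_inversions.toFinset k := fun p hp => by
  have hmem := hP.2.inversions_subset_of_prefix (readWord_rowsFrom_prefix P k) hp
  rw [hP.1] at hmem
  exact mem_rowsFrom.2 ⟨hP.finite_inversions.mem_toFinset.2 hmem,
    le_fst_of_mem_inversions (fun _ => wordPerm_readWord_rowsFrom_apply) hp⟩

theorem IsPD.ncard_inversions_rowsFrom (hP : IsPD w P) (k : ℕ) :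
    (inversions (wordPerm (readWord (rowsFrom P k)))).ncard = (rowsFrom P k).card := by
  rw [← length_readWord]
  exact isReducedWord_iff.1 (hP.2.of_prefix (readWord_rowsFrom_prefix P k))

theorem IsPD.sum_lehmer_le (hP : IsPD w P) (k : ℕ) :
    ∑ i ∈ Finset.range k, lehmer w i ≤ ∑ i ∈ Finset.range k, rowWt P i := by
  have hle := Set.ncard_le_ncard (hP.inversions_rowsFrom_subset k) (Finset.finite_toSet _)
  rw [hP.ncard_inversions_rowsFrom, Set.ncard_coe_finset] at hle
  have hI := sum_lehmer_add hP.finite_inversions k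
  have hsum := card_rowsFrom_add P k
  rw [hP.card_eq] at hsum
  omega

theorem IsPD.dominates_lehmerFin (hP : IsPD w P) : Dominates (wtFin n P) (lehmerFin n w) :=
  dominates_iff.2 fun k hk =>
    (psum_eq_sum_range (lehmer w) hk).trans_le <|
      (hP.sum_lehmer_le k).trans_eq (psum_eq_sum_range (rowWt P) hk).symm

theorem IsPD.inversions_rowsFrom (hP : IsPD w P) (hwt : ∀ i, rowWt P i = lehmer w i) (k : ℕ) :
    inversions (wordPerm (readWord (rowsFrom P k))) =
      rowsFrom hP.finite_inversions.toFinset k := by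
  refine Set.eq_of_subset_of_ncard_le (hP.inversions_rowsFrom_subset k) ?_ (Finset.finite_toSet _)
  rw [Set.ncard_coe_finset, hP.ncard_inversions_rowsFrom]
  have hI := sum_lehmer_add hP.finite_inversions k
  have hsum := card_rowsFrom_add P k
  simp only [hwt, hP.card_eq] at hsum
  omega

theorem IsPD.lehmer_rowsFrom (hP : IsPD w P) (hwt : ∀ i, rowWt P i = lehmer w i) (i : ℕ) :
    lehmer (wordPerm (readWord (rowsFrom P i))) i = lehmer w i :=
  lehmer_congr fun j hj => by
    have h := Set.ext_iff.1 (hP.inversions_rowsFrom hwt i) (i, j)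
    simpa [inversions, hj] using h

theorem pairwise_lt_readWord_row (P : Finset (ℕ × ℕ)) (i : ℕ) :
    (readWord (P.filter (·.1 = i))).Pairwise (· < ·) := by
  rw [readWord_eq_map_crossList, List.pairwise_map]
  refine (pairwise_crossList _).imp_of_mem fun {p q} hp hq h => ?_
  have hp := (Finset.mem_filter.1 (mem_crossList.1 hp)).2
  have hq := (Finset.mem_filter.1 (mem_crossList.1 hq)).2
  have h := Prod.lex_def.1 h
  omega

theorem add_mem_readWord_row : i + j ∈ readWord (P.filter (·.1 = i)) ↔ (i, j) ∈ P := by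
  rw [mem_readWord]
  refine ⟨fun ⟨⟨a, b⟩, hp, hab⟩ => ?_, fun h => ⟨(i, j), by simp [h], rfl⟩⟩
  obtain ⟨hp, rfl⟩ := Finset.mem_filter.1 hp
  rwa [← Nat.add_left_cancel hab]

/-- Each letter of an increasing word raises the image of `i` by one or not at all, so that a
raise by the full length forces the letters to be consecutive. -/
theorem eq_range'_of_le_wordPerm_apply (hl : l.Pairwise (· < ·)) (hi : ∀ a ∈ l, i ≤ a)
    (h : i + l.length ≤ wordPerm l i) : l = List.range' i l.length := by
  induction l generalizing i with
  | nil => rfl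
  | cons a l ih =>
    obtain ⟨hal, hpair⟩ := List.pairwise_cons.1 hl
    rw [← List.singleton_append, wordPerm_append, wordPerm_singleton, Equiv.Perm.mul_apply] at h
    rcases (hi a List.mem_cons_self).eq_or_lt with rfl | hia
    · rw [Equiv.swap_apply_left, List.length_append, List.length_singleton, ← add_assoc] at h
      rw [List.length_cons, List.range'_succ, ← ih hpair hal h]
    · rw [Equiv.swap_apply_of_ne_of_ne hia.ne (by omega),
        wordPerm_apply_of_lt (fun b hb => (hal b hb).le) hia] at h
      simp at h

theorem IsPD.readWord_row (hP : IsPD w P) (hwt : ∀ i, rowWt P i = lehmer w i) (i : ℕ) :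
    readWord (P.filter (·.1 = i)) = List.range' i (lehmer w i) := by
  have hlen : (readWord (P.filter (·.1 = i))).length = lehmer w i := by
    rw [length_readWord, ← hwt, rowWt]
  have happly : wordPerm (readWord (P.filter (·.1 = i))) i = i + lehmer w i := by
    rw [← hP.lehmer_rowsFrom hwt, ← apply_eq_add_lehmer fun _ => wordPerm_readWord_rowsFrom_apply,
      readWord_rowsFrom, wordPerm_append, Equiv.Perm.mul_apply,
      wordPerm_readWord_rowsFrom_apply i.lt_succ_self]
  rw [← hlen]
  refine eq_range'_of_le_wordPerm_apply (pairwise_lt_readWord_row P i) (fun a ha => ?_)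
    (by rw [happly, hlen])
  obtain ⟨p, hp, rfl⟩ := mem_readWord.1 ha
  exact (Finset.mem_filter.1 hp).2 ▸ Nat.le_add_right _ _

theorem IsPD.eq_bottomPD (hN : ∀ i, N ≤ i → w i = i) (hP : IsPD w P)
    (hwt : ∀ i, rowWt P i = lehmer w i) : P = bottomPD w N := by
  ext ⟨i, j⟩
  have hzero : N ≤ i → lehmer w i = 0 := lehmer_eq_zero_of_fixed hN
  rw [← add_mem_readWord_row, hP.readWord_row hwt, List.mem_range'_1, bottomPD, mem_leftJustified]
  dsimp only
  omega

theorem IsPD.lt_of_mem_head? (hP : IsPD w P) (hdes : ∀ i, n ≤ i + 1 → w i < w (i + 1)) :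
    ∀ a ∈ (readWord P).head?, a < n := fun a ha => by
  have hlt := hP.2.apply_succ_lt_of_mem_head? ha
  rw [hP.1] at hlt
  by_contra! h
  exact hlt.asymm (hdes a (h.trans a.le_succ))

theorem IsPD.rowWt_eq_lehmer (hP : IsPD w P) (hdes : ∀ i, n ≤ i + 1 → w i < w (i + 1))
    (hwt : wtFin n P = lehmerFin n w) (i : ℕ) : rowWt P i = lehmer w i := by
  rcases lt_or_ge i n with hi | hi
  · exact congrFun hwt ⟨i, hi⟩
  · have hmono : ∀ j, i < j → w i < w j := fun j hj =>
      Nat.rel_of_forall_rel_succ_of_le_of_lt (· < ·) (f := w)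
        (fun i hi => hdes i (hi.trans i.le_succ)) hi hj
    have hrow := fst_lt_of_readWord_head? (hP.lt_of_mem_head? hdes)
    rw [lehmer_eq_zero hmono, rowWt, Finset.card_eq_zero, Finset.filter_eq_empty_iff]
    exact fun p hp h => (hrow p hp).not_ge (h ▸ hi)

theorem wtFin_bottomPD (hN : ∀ i, N ≤ i → w i = i) : wtFin n (bottomPD w N) = lehmerFin n w :=
  funext fun i => rowWt_bottomPD hN i

end Weights

/-! ### The slide expansion -/

section Expansion

variable {n N : ℕ} {w : Equiv.Perm ℕ}

theorem exists_coeff_sum_eq_finsum {ι β M : Type*} [AddCommGroup M] {s : Finset ι} {g : ι → β}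
    {A : Set β} (f : β → M) (hg : ∀ i ∈ s, g i ∈ A) :
    ∃ c : β → ℕ, {b | c b ≠ 0}.Finite ∧ ∑ i ∈ s, f (g i) = ∑ᶠ b ∈ A, (c b : ℤ) • f b := by
  have hsupp : ∀ b, {i ∈ s | g i = b}.card ≠ 0 → b ∈ s.image g := fun b hb => by
    obtain ⟨i, hi⟩ := Finset.card_ne_zero.1 hb
    exact Finset.mem_image.2 ⟨i, Finset.mem_filter.1 hi⟩
  refine ⟨fun b => {i ∈ s | g i = b}.card, (Finset.finite_toSet (s.image g)).subset hsupp, ?_⟩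
  rw [Finset.sum_comp, finsum_mem_eq_sum_of_inter_support_eq (t := s.image g)]
  · simp only [natCast_zsmul]
  · ext b
    refine and_congr_left fun hb => ?_
    have hmem : b ∈ s.image g := hsupp b fun h => hb (by simp only [h, Nat.cast_zero, zero_smul])
    obtain ⟨i, hi, rfl⟩ := Finset.mem_image.1 hmem
    exact iff_of_true (hg i hi) hmem

theorem schubertPoly_eq_sum_slideF (hN : ∀ i, N ≤ i → w i = i)
    (hdes : ∀ i, n ≤ i + 1 → w i < w (i + 1)) :
    SchubertPoly n w = ∑ r ∈ (finite_setOf_isPD hN).toFinset.image readWord,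
      slideF (wtFin n (highestPD r)) := by
  rw [SchubertPoly, finsum_mem_eq_finite_toFinset_sum _ (finite_setOf_isPD hN),
    ← Finset.sum_fiberwise_of_maps_to fun P hP => Finset.mem_image_of_mem readWord hP]
  refine Finset.sum_congr rfl fun r hr => ?_
  obtain ⟨P, hP, rfl⟩ := Finset.mem_image.1 hr
  replace hP : IsPD w P := (finite_setOf_isPD hN).mem_toFinset.1 hP
  refine sum_monomial_wtFin_eq_slideF (hP.lt_of_mem_head? hdes) fun Q => ?_
  rw [Finset.mem_filter, Set.Finite.mem_toFinset, and_iff_right_iff_imp]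
  exact fun hQ => by rwa [Set.mem_ofPred_eq, IsPD, hQ]

theorem IsPD.isPD_highestPD {P : Finset (ℕ × ℕ)} (hP : IsPD w P) :
    IsPD w (highestPD (readWord P)) := by
  rwa [IsPD, readWord_highestPD]

theorem wtFin_highestPD_bottomPD (hN : ∀ i, N ≤ i → w i = i)
    (hdes : ∀ i, n ≤ i + 1 → w i < w (i + 1)) :
    wtFin n (highestPD (readWord (bottomPD w N))) = lehmerFin n w := by
  have hB := isPD_bottomPD hN
  have hdom := (dominates_refines_wtFin_highestPD (hB.lt_of_mem_head? hdes)).1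
  rw [wtFin_bottomPD hN] at hdom
  exact hB.isPD_highestPD.dominates_lehmerFin.antisymm hdom

theorem IsPD.readWord_eq_of_wtFin_highestPD {P : Finset (ℕ × ℕ)} (hP : IsPD w P)
    (hN : ∀ i, N ≤ i → w i = i) (hdes : ∀ i, n ≤ i + 1 → w i < w (i + 1))
    (hwt : wtFin n (highestPD (readWord P)) = lehmerFin n w) :
    readWord P = readWord (bottomPD w N) := by
  have hrow := hP.isPD_highestPD.rowWt_eq_lehmer hdes hwt
  rw [← readWord_highestPD, hP.isPD_highestPD.eq_bottomPD hN hrow]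

end Expansion

/-- `𝔖_w = 𝔉_{L(w)} + Σ_{b > L(w)} c_{w,b} 𝔉_b` with nonnegative integer
coefficients, the sum being over weak compositions strictly dominating the Lehmer code. -/
theorem schubert_fundamentalSlide_triangular (n : ℕ) (w : Equiv.Perm ℕ)
    (hfin : ∃ N, ∀ i, N ≤ i → w i = i)
    (hdes : ∀ i : ℕ, n ≤ i + 1 → w i < w (i + 1)) :
    ∃ c : (Fin n → ℕ) → ℕ, {b | c b ≠ 0}.Finite ∧
      SchubertPoly n w = slideF (lehmerFin n w) +
        ∑ᶠ b ∈ {b : Fin n → ℕ | Dominates b (lehmerFin n w) ∧ b ≠ lehmerFin n w},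
          (c b : ℤ) • slideF b := by
  obtain ⟨N, hN⟩ := hfin
  set words := (finite_setOf_isPD hN).toFinset.image readWord
  have hbottom : readWord (bottomPD w N) ∈ words :=
    Finset.mem_image_of_mem _ ((finite_setOf_isPD hN).mem_toFinset.2 (isPD_bottomPD hN))
  have hgt : ∀ r ∈ words.erase (readWord (bottomPD w N)), wtFin n (highestPD r) ∈
      {b | Dominates b (lehmerFin n w) ∧ b ≠ lehmerFin n w} := by
    intro r hr
    obtain ⟨hne, hr⟩ := Finset.mem_erase.1 hr
    obtain ⟨P, hP, rfl⟩ := Finset.mem_image.1 hr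
    replace hP : IsPD w P := (finite_setOf_isPD hN).mem_toFinset.1 hP
    exact ⟨hP.isPD_highestPD.dominates_lehmerFin,
      fun hwt => hne (hP.readWord_eq_of_wtFin_highestPD hN hdes hwt)⟩
  obtain ⟨c, hc, hsum⟩ := exists_coeff_sum_eq_finsum slideF hgt
  refine ⟨c, hc, ?_⟩
  rw [schubertPoly_eq_sum_slideF hN hdes, ← Finset.add_sum_erase _ _ hbottom, hsum,
    wtFin_highestPD_bottomPD hN hdes]

end SlidePaper
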